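/- arXiv:1903.06114 — 5 statements merged into one kernel-verified Lean document; each statement's English description precedes it below -/
import Mathlib

section
/- Let p ≥ 1 and m ≥ 1 be integers and write m = k·2^z with k odd. Let L be the language over the alphabet {0,…,2^p−1} consisting of all words w (leading zeros allowed) such that val_{2^p}(w) ∈ m·T, where T is the Thue–Morse set. Then the set of left quotients {w⁻¹L : w a word over {0,…,2^p−1}} (where w⁻¹L = {u : w·u ∈ L}) has exactly 2k + ⌈z/p⌉ elements; that is, the state complexity of m·T with respect to the base 2^p equals 2k + ⌈z/p⌉. -/
/-- The parity (in `ZMod 2`) of the number of 1s in the binary expansion of `n`. -/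
def sTM (n : ℕ) : ZMod 2 := ((Nat.digits 2 n).count 1 : ZMod 2)

/-- The Thue–Morse set: natural numbers with an even number of 1s in base 2. -/
def ThueMorse : Set ℕ := {n | sTM n = 0}

/-- The value of a word over `{0,…,b-1}` (most significant digit first) in base `b`. -/
def valb (b : ℕ) (w : List (Fin b)) : ℕ := w.foldl (fun a d => b * a + d.val) 0

/-- The left quotient of a language by a word. -/
def leftQuot {α : Type*} (L : Set (List α)) (w : List α) : Set (List α) := {u | w ++ u ∈ L}

lemma sTM_zero : sTM 0 = 0 := by simp [sTM]

lemma sTM_two_mul (n : ℕ) : sTM (2 * n) = sTM n := by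
  rcases Nat.eq_zero_or_pos n with rfl | h
  · simp
  · unfold sTM
    have := Nat.digits_add 2 (by norm_num) 0 n (by norm_num) (Or.inr h.ne')
    rw [zero_add] at this
    rw [this]; simp

lemma sTM_two_mul_add (n : ℕ) : sTM (2 * n + 1) = sTM n + 1 := by
  unfold sTM
  have := Nat.digits_add 2 (by norm_num) 1 n (by norm_num) (Or.inl (by norm_num))
  rw [add_comm] at this
  rw [this]; simp

lemma sTM_add (N a s : ℕ) (hs : s < 2 ^ N) : sTM (2 ^ N * a + s) = sTM a + sTM s := by
  induction N generalizing s with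
  | zero =>
    have : s = 0 := by simpa using hs
    subst this
    simp [sTM_zero]
  | succ N ih =>
    rw [pow_succ] at hs ⊢
    rcases Nat.even_or_odd' s with ⟨c, rfl | rfl⟩
    · have e : 2 ^ N * 2 * a + 2 * c = 2 * (2 ^ N * a + c) := by ring
      rw [e, sTM_two_mul, sTM_two_mul, ih c (by omega)]
    · have e : 2 ^ N * 2 * a + (2 * c + 1) = 2 * (2 ^ N * a + c) + 1 := by ring
      rw [e, sTM_two_mul_add, sTM_two_mul_add, ih c (by omega), add_assoc]

lemma sTM_pow_mul (N a : ℕ) : sTM (2 ^ N * a) = sTM a := by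
  have := sTM_add N a 0 (by positivity)
  simpa [sTM_zero] using this

lemma sTM_one : sTM 1 = 1 := by
  have := sTM_two_mul_add 0
  simpa [sTM_zero] using this

lemma sTM_three : sTM 3 = 0 := by
  have := sTM_two_mul_add 1
  rw [sTM_one] at this
  rw [show 3 = 2 * 1 + 1 by norm_num, this]; decide

lemma zmod2_add (a b : ZMod 2) : a + b = 0 ↔ b = a := by revert a b; decide

lemma valb_append_singleton (b : ℕ) (w : List (Fin b)) (d : Fin b) :
    valb b (w ++ [d]) = b * valb b w + d.val := by
  simp [valb]

lemma valb_append (b : ℕ) (w u : List (Fin b)) :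
    valb b (w ++ u) = valb b w * b ^ u.length + valb b u := by
  induction u using List.reverseRecOn with
  | nil => simp [valb]
  | append_singleton u d ih =>
    rw [← List.append_assoc, valb_append_singleton, valb_append_singleton, ih]
    simp only [List.length_append, List.length_singleton, pow_succ]
    ring

lemma valb_lt (b : ℕ) (u : List (Fin b)) : valb b u < b ^ u.length := by
  induction u using List.reverseRecOn with
  | nil => simp [valb]
  | append_singleton u d ih =>
    rw [valb_append_singleton]
    simp only [List.length_append, List.length_singleton, pow_succ]
    have := d.isLt
    nlinarith

lemma valb_surj (b : ℕ) (hb : 0 < b) (l v : ℕ) (hv : v < b ^ l) :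
    ∃ u : List (Fin b), u.length = l ∧ valb b u = v := by
  induction l generalizing v with
  | zero => exact ⟨[], rfl, by simp at hv; simp [valb, hv]⟩
  | succ l ih =>
    rw [pow_succ] at hv
    obtain ⟨u, h1, h2⟩ := ih (v / b) (Nat.div_lt_of_lt_mul (by rwa [mul_comm] at hv))
    refine ⟨u ++ [⟨v % b, Nat.mod_lt _ hb⟩], by simp [h1], ?_⟩
    rw [valb_append_singleton, h2]
    exact Nat.div_add_mod v b

/-- acceptance of length `l`, value `v` words from value `n`. -/
def accTM (p k z n l v : ℕ) : Prop := ∃ t, sTM t = 0 ∧ n * 2 ^ (p * l) + v = k * 2 ^ z * t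

lemma acc_long (p k z n l v : ℕ) (hk : 0 < k) (h : z ≤ p * l) (hv : v < 2 ^ (p * l)) :
    accTM p k z n l v ↔
      ∃ s, (n % k) * 2 ^ (p * l) + v = k * 2 ^ z * s ∧ sTM s = sTM (n / k) := by
  obtain ⟨N, hN⟩ := Nat.exists_eq_add_of_le h
  unfold accTM
  rw [hN, pow_add] at hv ⊢
  have hz : 0 < 2 ^ z := by positivity
  have hn := Nat.div_add_mod n k
  have hi := Nat.mod_lt n hk
  set i := n % k
  set J := n / k
  have key : n * (2 ^ z * 2 ^ N) + v = k * 2 ^ z * (2 ^ N * J) + (i * (2 ^ z * 2 ^ N) + v) := by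
    rw [← hn]; ring
  have small : ∀ s, i * (2 ^ z * 2 ^ N) + v = k * 2 ^ z * s → s < 2 ^ N := by
    intro s hs
    have h1 : (i + 1) * (2 ^ z * 2 ^ N) ≤ k * (2 ^ z * 2 ^ N) := Nat.mul_le_mul_right _ hi
    have h2 : k * 2 ^ z * s < k * 2 ^ z * 2 ^ N := by nlinarith
    exact lt_of_mul_lt_mul_left h2 (Nat.zero_le _)
  rw [key]
  constructor
  · rintro ⟨t, ht, e⟩
    have hle : 2 ^ N * J ≤ t := by
      have : k * 2 ^ z * (2 ^ N * J) ≤ k * 2 ^ z * t := by omega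
      exact le_of_mul_le_mul_left this (by positivity)
    obtain ⟨s, rfl⟩ := Nat.exists_eq_add_of_le hle
    have e' : i * (2 ^ z * 2 ^ N) + v = k * 2 ^ z * s := by
      rw [mul_add (k * 2 ^ z)] at e; omega
    refine ⟨s, e', ?_⟩
    rw [sTM_add _ _ _ (small s e'), zmod2_add] at ht
    exact ht
  · rintro ⟨s, e, hs⟩
    refine ⟨2 ^ N * J + s, ?_, ?_⟩
    · rw [sTM_add _ _ _ (small s e), zmod2_add]; exact hs
    · rw [e]; ring

lemma acc_short (p k z n l v : ℕ) (hk : 0 < k) (h : p * l ≤ z) (hv : v < 2 ^ (p * l)) :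
    accTM p k z n l v ↔
      v = 0 ∧ (n % k = 0 ∧ sTM (n / k) = 0) ∧ 2 ^ (z - p * l) ∣ n / k := by
  obtain ⟨N, hN⟩ := Nat.exists_eq_add_of_le h
  have hsub : z - p * l = N := by omega
  unfold accTM
  rw [hsub, hN, pow_add]
  set B := 2 ^ (p * l) with hB
  have hB0 : 0 < B := by positivity
  constructor
  · rintro ⟨t, ht, e⟩
    have hv0 : v = 0 := by
      have hd : B ∣ n * B + v := by rw [e]; exact ⟨k * 2 ^ N * t, by ring⟩
      have : B ∣ v := (Nat.dvd_add_right (Dvd.intro_left n rfl)).1 hd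
      exact Nat.eq_zero_of_dvd_of_lt this hv
    subst hv0
    have hn : n = k * (2 ^ N * t) := by
      apply Nat.eq_of_mul_eq_mul_right hB0
      rw [add_zero] at e; rw [e]; ring
    subst hn
    rw [Nat.mul_div_cancel_left _ hk, sTM_pow_mul]
    exact ⟨rfl, ⟨Nat.mul_mod_right _ _, ht⟩, Dvd.intro _ rfl⟩
  · rintro ⟨rfl, ⟨hi, hs⟩, t, ht⟩
    refine ⟨t, ?_, ?_⟩
    · rwa [ht, sTM_pow_mul] at hs
    · have hn := Nat.div_add_mod n k
      rw [← hn, hi, ht]; ring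

def DTM (p k z n : ℕ) : Set ℕ :=
  {l | (n % k = 0 ∧ sTM (n / k) = 0) → 2 ^ (z - p * l) ∣ n / k}

lemma DTM_of_le (p k z n l : ℕ) (h : z ≤ p * l) : l ∈ DTM p k z n := by
  intro _
  rw [Nat.sub_eq_zero_of_le h]; simp

lemma DTM_mem (p k z n l : ℕ) (hp : 1 ≤ p) : l ∈ DTM p k z n ↔ sInf (DTM p k z n) ≤ l := by
  refine ⟨fun h => Nat.sInf_le h, fun h => ?_⟩
  have h1 : sInf (DTM p k z n) ∈ DTM p k z n :=
    Nat.sInf_mem ⟨z, DTM_of_le _ _ _ _ _ (by nlinarith)⟩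
  intro hc
  refine dvd_trans (pow_dvd_pow 2 ?_) (h1 hc)
  have := Nat.mul_le_mul_left p h
  omega

noncomputable def fTM (p k z n : ℕ) : ℕ × ZMod 2 × ℕ :=
  (n % k, sTM (n / k), sInf (DTM p k z n))

lemma acc_iff (p k z n n' : ℕ) (hp : 1 ≤ p) (hk : Odd k) :
    (∀ l v, v < 2 ^ (p * l) → (accTM p k z n l v ↔ accTM p k z n' l v)) ↔
      fTM p k z n = fTM p k z n' := by
  have hk0 : 0 < k := hk.pos
  constructor
  · intro H
    have main : n % k = n' % k ∧ sTM (n / k) = sTM (n' / k) := by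
      have hl : z + 4 * k ≤ p * (z + 4 * k) := by nlinarith
      obtain ⟨N, hN⟩ := Nat.exists_eq_add_of_le (show z ≤ p * (z + 4 * k) by omega)
      have hN4 : 4 * k < 2 ^ N :=
        lt_of_lt_of_le Nat.lt_two_pow_self (Nat.pow_le_pow_right (by norm_num) (by omega))
      set i := n % k with hi
      have hik := Nat.mod_lt n hk0
      obtain ⟨s, hs1, hs2, hs3⟩ : ∃ s, i * 2 ^ N ≤ k * s ∧ k * s < (i + 1) * 2 ^ N ∧
          sTM s = sTM (n / k) := by
        have hdm := Nat.div_add_mod (i * 2 ^ N) k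
        have hml := Nat.mod_lt (i * 2 ^ N) hk0
        set d := i * 2 ^ N / k
        have b1 : i * 2 ^ N ≤ k * (2 * (d / 2 + 1)) := by
          have : k * (d + 1) ≤ k * (2 * (d / 2 + 1)) := Nat.mul_le_mul_left _ (by omega)
          rw [mul_add] at this; omega
        have b2 : k * (2 * (d / 2 + 1) + 1) < (i + 1) * 2 ^ N := by
          have : k * (2 * (d / 2 + 1) + 1) ≤ k * (d + 3) := Nat.mul_le_mul_left _ (by omega)
          rw [mul_add k d] at this
          rw [add_mul]; omega
        by_cases hc : sTM (2 * (d / 2 + 1)) = sTM (n / k)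
        · refine ⟨_, b1, lt_of_le_of_lt (Nat.mul_le_mul_left _ (Nat.le_succ _)) b2, hc⟩
        · refine ⟨_, b1.trans (Nat.mul_le_mul_left _ (Nat.le_succ _)), b2, ?_⟩
          rw [sTM_two_mul] at hc
          rw [Nat.succ_eq_add_one, sTM_two_mul_add]
          generalize sTM (d / 2 + 1) = a at *
          generalize sTM (n / k) = b at *
          revert a b; decide
      obtain ⟨x, hx⟩ := Nat.exists_eq_add_of_le hs1
      have hxN : x < 2 ^ N := by rw [add_mul] at hs2; omega
      have hz : 0 < 2 ^ z := by positivity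
      have hv : 2 ^ z * x < 2 ^ (p * (z + 4 * k)) := by
        rw [hN, pow_add]; exact Nat.mul_lt_mul_of_pos_left hxN hz
      have h1 := (acc_long p k z n _ _ hk0 (by omega) hv).2 ⟨s, by
        rw [hN, pow_add, mul_assoc k, mul_left_comm k, hx]; ring, hs3⟩
      rw [H _ _ hv, acc_long p k z n' _ _ hk0 (by omega) hv] at h1
      obtain ⟨s', e', hs'⟩ := h1
      have e2 : n' % k * 2 ^ N + x = k * s' := by
        apply Nat.eq_of_mul_eq_mul_left hz
        rw [hN, pow_add] at e'
        linarith
      have hmod : i * 2 ^ N ≡ n' % k * 2 ^ N [MOD k] := by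
        apply Nat.ModEq.add_right_cancel' x
        rw [e2, ← hx]
        simp [Nat.ModEq]
      have hcop : Nat.gcd k (2 ^ N) = 1 :=
        Nat.Coprime.pow_right _ (Nat.coprime_two_right.2 hk)
      have hii : i = n' % k :=
        Nat.ModEq.eq_of_lt_of_lt (Nat.ModEq.cancel_right_of_coprime hcop hmod) hik
          (Nat.mod_lt _ hk0)
      refine ⟨hii, ?_⟩
      have : s = s' := by
        apply Nat.eq_of_mul_eq_mul_left hk0
        rw [hx, ← e2, hii]
      rw [← hs3, this, hs']
    have hD : DTM p k z n = DTM p k z n' := by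
      ext l
      by_cases hl : z ≤ p * l
      · exact ⟨fun _ => DTM_of_le _ _ _ _ _ hl, fun _ => DTM_of_le _ _ _ _ _ hl⟩
      · have hh := H l 0 (by positivity)
        rw [acc_short _ _ _ _ _ _ hk0 (by omega) (by positivity),
          acc_short _ _ _ _ _ _ hk0 (by omega) (by positivity), main.1, main.2] at hh
        simp only [DTM, Set.mem_setOf_eq, main.1, main.2]
        tauto
    simp only [fTM, main.1, main.2, hD]
  · intro H l v hv
    simp only [fTM, Prod.mk.injEq] at H
    obtain ⟨h1, h2, h3⟩ := H
    by_cases hl : z ≤ p * l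
    · rw [acc_long _ _ _ _ _ _ hk0 hl hv, acc_long _ _ _ _ _ _ hk0 hl hv, h1, h2]
    · have hD : l ∈ DTM p k z n ↔ l ∈ DTM p k z n' := by
        rw [DTM_mem _ _ _ _ _ hp, DTM_mem _ _ _ _ _ hp, h3]
      rw [acc_short _ _ _ _ _ _ hk0 (by omega) hv, acc_short _ _ _ _ _ _ hk0 (by omega) hv,
        h1, h2]
      simp only [DTM, Set.mem_setOf_eq, h1, h2] at hD
      tauto

lemma range_fTM (p k z : ℕ) (hp : 1 ≤ p) (hk : 0 < k) :
    Set.range (fTM p k z) =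
      ((Finset.range k ×ˢ (Finset.univ : Finset (ZMod 2)) ×ˢ ({0} : Finset ℕ)) ∪
        (({0} : Finset ℕ) ×ˢ ({0} : Finset (ZMod 2)) ×ˢ Finset.Icc 1 ((z + p - 1) / p)) :
          Finset (ℕ × ZMod 2 × ℕ)) := by
  have hZ : z ≤ p * ((z + p - 1) / p) := by
    have h1 := Nat.div_add_mod (z + p - 1) p
    have h2 := Nat.mod_lt (z + p - 1) (show 0 < p by omega)
    omega
  have zero_of : ∀ n, 0 ∈ DTM p k z n → sInf (DTM p k z n) = 0 := fun n h =>
    Nat.le_zero.1 (Nat.sInf_le h)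
  ext ⟨i, e, l⟩
  simp only [Set.mem_range, fTM, Prod.mk.injEq, Finset.coe_union, Finset.coe_product, Set.mem_union,
    Set.mem_prod, Finset.mem_coe, Finset.mem_range, Finset.mem_univ, Finset.mem_singleton,
    Finset.mem_Icc, true_and]
  constructor
  · rintro ⟨n, rfl, rfl, rfl⟩
    have hle : sInf (DTM p k z n) ≤ (z + p - 1) / p := Nat.sInf_le (DTM_of_le _ _ _ _ _ hZ)
    by_cases hc : n % k = 0 ∧ sTM (n / k) = 0
    · by_cases h0 : sInf (DTM p k z n) = 0
      · exact Or.inl ⟨Nat.mod_lt _ hk, h0⟩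
      · exact Or.inr ⟨hc.1, hc.2, by omega, hle⟩
    · exact Or.inl ⟨Nat.mod_lt _ hk, zero_of n (fun h => absurd h hc)⟩
  · rintro (⟨hi, rfl⟩ | ⟨rfl, rfl, h1, h2⟩)
    · have he : e = 0 ∨ e = 1 := by revert e; decide
      rcases he with rfl | rfl
      · refine ⟨i, Nat.mod_eq_of_lt hi, by rw [Nat.div_eq_of_lt hi, sTM_zero], zero_of _ ?_⟩
        intro _
        rw [Nat.div_eq_of_lt hi]; exact dvd_zero _
      · have hd : (k + i) / k = 1 := by
          rw [Nat.add_div_left _ hk, Nat.div_eq_of_lt hi]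
        refine ⟨k + i, by rw [Nat.add_mod_left, Nat.mod_eq_of_lt hi], by rw [hd, sTM_one],
          zero_of _ ?_⟩
        intro h
        rw [hd, sTM_one] at h
        exact absurd h.2 (by decide)
    · have hd : k * (2 ^ (z - p * l) * 3) / k = 2 ^ (z - p * l) * 3 :=
        Nat.mul_div_cancel_left _ hk
      have hs : sTM (2 ^ (z - p * l) * 3) = 0 := by rw [sTM_pow_mul, sTM_three]
      refine ⟨k * (2 ^ (z - p * l) * 3), Nat.mul_mod_right _ _, by rw [hd, hs], ?_⟩
      apply le_antisymm
      · apply Nat.sInf_le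
        intro _
        rw [hd]; exact Dvd.intro _ rfl
      · by_contra hlt
        have hm : l - 1 ∈ DTM p k z (k * (2 ^ (z - p * l) * 3)) := by
          rw [DTM_mem _ _ _ _ _ hp]; omega
        have := hm ⟨Nat.mul_mod_right _ _, by rw [hd, hs]⟩
        rw [hd] at this
        have hpl : p * (l - 1) < z := by
          have h3 := Nat.div_mul_le_self (z + p - 1) p
          have h4 := Nat.mul_le_mul_right p h2
          have h5 : p * (l - 1) + p = l * p := by
            obtain ⟨c, rfl⟩ := Nat.exists_eq_add_of_le h1
            simp; ring
          omega
        have h5 : p * l = p * (l - 1) + p := by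
          obtain ⟨c, rfl⟩ := Nat.exists_eq_add_of_le h1
          simp; ring
        have h6 : 2 ^ (z - p * l + 1) ∣ 2 ^ (z - p * l) * 3 :=
          dvd_trans (pow_dvd_pow 2 (by omega)) this
        rw [pow_succ] at h6
        have := Nat.dvd_of_mul_dvd_mul_left (by positivity) h6
        omega

lemma ncard_range_congr {α β : Type*} (A : ℕ → α) (B : ℕ → β)
    (h : ∀ x y, A x = A y ↔ B x = B y) : (Set.range A).ncard = (Set.range B).ncard := by
  refine Set.ncard_congr (fun a ha => B ha.choose) ?_ ?_ ?_
  · intro a ha; exact ⟨_, rfl⟩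
  · intro a b ha hb hab
    rw [← h, ha.choose_spec, hb.choose_spec] at hab
    exact hab
  · rintro _ ⟨x, rfl⟩
    refine ⟨A x, ⟨x, rfl⟩, ?_⟩
    rw [← h]
    exact (⟨x, rfl⟩ : A x ∈ Set.range A).choose_spec

theorem state_complexity_of_mT (p m k z : ℕ) (hp : 1 ≤ p) (hm : 1 ≤ m)
    (hk : Odd k) (hmk : m = k * 2 ^ z)
    (L : Set (List (Fin (2 ^ p))))
    (hL : L = {w | ∃ t ∈ ThueMorse, valb (2 ^ p) w = m * t}) :
    {Q | ∃ w : List (Fin (2 ^ p)), Q = leftQuot L w}.ncard = 2 * k + (z + p - 1) / p := by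
  have hb : 0 < 2 ^ p := by positivity
  let A : ℕ → Set (List (Fin (2 ^ p))) := fun n =>
    {u | accTM p k z n u.length (valb (2 ^ p) u)}
  have hQ : ∀ w, leftQuot L w = A (valb (2 ^ p) w) := by
    intro w
    ext u
    simp only [leftQuot, hL, A, accTM, Set.mem_setOf_eq, ThueMorse, valb_append, hmk, pow_mul]
  have hset : {Q | ∃ w : List (Fin (2 ^ p)), Q = leftQuot L w} = Set.range A := by
    ext Q
    constructor
    · rintro ⟨w, rfl⟩; exact ⟨_, (hQ w).symm⟩
    · rintro ⟨n, rfl⟩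
      obtain ⟨w, -, hw⟩ := valb_surj (2 ^ p) hb n n
        (Nat.lt_pow_self (Nat.one_lt_two_pow (by omega)))
      exact ⟨w, by rw [hQ, hw]⟩
  have hA : ∀ x y, A x = A y ↔ fTM p k z x = fTM p k z y := by
    intro x y
    rw [← acc_iff p k z x y hp hk]
    constructor
    · intro h l v hv
      obtain ⟨u, rfl, rfl⟩ := valb_surj (2 ^ p) hb l v (by rwa [← pow_mul])
      exact Set.ext_iff.1 h u
    · intro h
      ext u
      exact h _ _ (by rw [pow_mul]; exact valb_lt _ _)
  rw [hset, ncard_range_congr A _ hA, range_fTM p k z hp hk.pos, Set.ncard_coe_finset,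
    Finset.card_union_of_disjoint]
  · simp [Finset.card_product, ZMod.card]; ring
  · rw [Finset.disjoint_left]
    rintro ⟨i, e, l⟩ h1 h2
    simp at h1 h2
    omega
end

section
/- Let p ≥ 1. For every word w over the alphabet {0,…,2^p−1}, the parity s(val_{2^p}(w)) equals the sum over all letters d of w of the parities s(d), computed in ZMod 2. In particular, val_{2^p}(w) belongs to the Thue–Morse set if and only if the total number of 1s occurring in the binary expansions of the letters of w is even. -/
theorem count_aux (p a d : ℕ) (hd : d < 2 ^ p) :
    (Nat.digits 2 (2 ^ p * a + d)).count 1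
      = (Nat.digits 2 a).count 1 + (Nat.digits 2 d).count 1 := by
  rcases Nat.eq_zero_or_pos a with rfl | ha
  · simp
  · have hl : (Nat.digits 2 d).length ≤ p :=
      (Nat.digits_length_le_iff (by norm_num) d).2 hd
    have h := Nat.digits_append_zeroes_append_digits (b := 2)
      (k := p - (Nat.digits 2 d).length) (m := a) (n := d) (by norm_num) ha
    rw [Nat.add_sub_cancel' hl, add_comm d] at h
    rw [← h]
    simp [List.count_append, List.count_replicate, add_comm]

theorem count_valb (p : ℕ) (w : List (Fin (2 ^ p))) :
    (Nat.digits 2 (valb (2 ^ p) w)).count 1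
      = (w.map (fun d => (Nat.digits 2 d.val).count 1)).sum := by
  induction w using List.reverseRecOn with
  | nil => simp [valb]
  | append_singleton l x ih =>
    have h : valb (2 ^ p) (l ++ [x]) = 2 ^ p * valb (2 ^ p) l + x.val := by
      simp [valb, List.foldl_append]
    rw [h, count_aux p _ _ x.isLt, ih]
    simp

theorem sTM_valb (p : ℕ) (hp : 1 ≤ p) (w : List (Fin (2 ^ p))) :
    sTM (valb (2 ^ p) w) = (w.map (fun d => sTM d.val)).sum ∧
    (valb (2 ^ p) w ∈ ThueMorse ↔
      Even ((w.map (fun d => (Nat.digits 2 d.val).count 1)).sum)) := by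
  constructor
  · unfold sTM
    rw [count_valb, Nat.cast_list_sum, List.map_map]
    rfl
  · change sTM _ = 0 ↔ _
    unfold sTM
    rw [count_valb, ZMod.natCast_eq_zero_iff_even]
end

section
/- Let p ≥ 1, z ∈ ℕ, and let k be an odd integer with k ≥ 2; set m = k·2^z. Let n ∈ ℕ satisfy p·n ≥ z, let L be the number of digits of the base-2^p expansion of m (in Lean, L = (Nat.digits (2^p) m).length), and for j < k define σ(j) = (−j·2^{pn−z}) mod k. Then for all j, j' < k: k·2^z divides j'·2^{p(n+L)} + σ(j)·2^{z+pL} if and only if j = j'. -/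
theorem sigma_word_rep_accepted_iff (p z k n : ℕ) (hp : 1 ≤ p) (hkodd : Odd k) (hk : 2 ≤ k)
    (m : ℕ) (hm : m = k * 2 ^ z) (hn : z ≤ p * n)
    (L : ℕ) (hL : L = (Nat.digits (2 ^ p) m).length)
    (σ : ℕ → ℕ) (hσ : ∀ j, σ j = ((-(j * 2 ^ (p * n - z) : ℤ)) % (k : ℤ)).toNat) :
    ∀ j j', j < k → j' < k →
      ((k * 2 ^ z ∣ j' * 2 ^ (p * (n + L)) + σ j * 2 ^ (z + p * L)) ↔ j = j') := by
  intro j j' hj hj'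
  obtain ⟨e, he⟩ := Nat.exists_eq_add_of_le hn
  have he' : p * n - z = e := by omega
  have h1 : j' * 2 ^ (p * (n + L)) + σ j * 2 ^ (z + p * L)
      = ((j' * 2 ^ e + σ j) * 2 ^ (p * L)) * 2 ^ z := by
    rw [mul_add, he]; ring
  have hc : ∀ a, Nat.Coprime k (2 ^ a) := fun a =>
    Nat.Coprime.pow_right a (Nat.coprime_two_right.mpr hkodd)
  have hk0 : (k : ℤ) ≠ 0 := by omega
  have hs : (σ j : ℤ) = (-((j : ℤ) * 2 ^ e)) % (k : ℤ) := by
    rw [hσ, he', Int.toNat_of_nonneg (Int.emod_nonneg _ hk0)]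
  rw [h1, Nat.mul_dvd_mul_iff_right (by positivity), (hc _).dvd_mul_right]
  have h2 : k ∣ j' * 2 ^ e + σ j ↔ (k : ℤ) ∣ ((j' : ℤ) - j) * 2 ^ e := by
    rw [← Int.natCast_dvd_natCast]
    push_cast
    rw [hs, Int.emod_def]
    have : (j' : ℤ) * 2 ^ e + (-((j : ℤ) * 2 ^ e) - k * (-((j : ℤ) * 2 ^ e) / k))
      = ((j' : ℤ) - j) * 2 ^ e - k * (-((j : ℤ) * 2 ^ e) / k) := by ring
    rw [this, dvd_sub_left (dvd_mul_right _ _)]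
  rw [h2]
  constructor
  · intro h
    have hcz : IsCoprime (k : ℤ) (2 ^ e) := by
      have := Nat.isCoprime_iff_coprime.mpr (hc e)
      push_cast at this
      exact this
    have h3 := hcz.dvd_of_dvd_mul_right h
    have h4 := Int.eq_zero_of_abs_lt_dvd h3 (by rw [abs_lt]; omega)
    omega
  · rintro rfl
    simp
end

section
/- Let p ≥ 1 and m = k·2^z with k odd and z ≥ 1. Let α ∈ [0, z−1] and ℓ ∈ [1, 2^α − 1]. Then for all n ∈ ℕ and all e < 2^{pn}: [m divides 2^{pn}·k·2^{z−α−1} + e and s((2^{pn}·k·2^{z−α−1} + e)/m) = 1] if and only if [m divides 2^{pn}·(k·2^{z−α−1} + k·2^{z−α}·ℓ) + e and s((2^{pn}·(k·2^{z−α−1} + k·2^{z−α}·ℓ) + e)/m) = 1 + s(ℓ)]. [This shows that all states of the pre-class C_α of the projected automaton accept the same language.] -/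
theorem sTM_rec (n : ℕ) : sTM n = ((n % 2 : ℕ) : ZMod 2) + sTM (n / 2) := by
  rcases Nat.eq_zero_or_pos n with h | h
  · subst h; simp [sTM]
  · unfold sTM
    rw [Nat.digits_def' (by norm_num) h, List.count_cons]
    rcases Nat.mod_two_eq_zero_or_one n with h2 | h2 <;> simp [h2, add_comm]

theorem sTM_append (j l : ℕ) : ∀ x : ℕ, x < 2 ^ j → sTM (x + 2 ^ j * l) = sTM x + sTM l := by
  induction j with
  | zero =>
    intro x hx
    have : x = 0 := by simpa using hx
    subst this; simp [sTM]
  | succ j ih =>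
    intro x hx
    have h3 : x + 2 ^ (j+1) * l = x + 2 * (2 ^ j * l) := by ring
    have h4 : x / 2 < 2 ^ j := by rw [pow_succ] at hx; omega
    rw [sTM_rec (x + 2 ^ (j+1) * l), sTM_rec x, h3,
      show (x + 2 * (2 ^ j * l)) % 2 = x % 2 by omega,
      show (x + 2 * (2 ^ j * l)) / 2 = x / 2 + 2 ^ j * l by omega, ih _ h4, add_assoc]

theorem preclass_indistinguishable (p m k z : ℕ) (hp : 1 ≤ p) (hkodd : Odd k) (hz : 1 ≤ z)
    (hm : m = k * 2 ^ z)
    (α : ℕ) (hα : α ≤ z - 1) (ℓ : ℕ) (hℓ1 : 1 ≤ ℓ) (hℓ2 : ℓ ≤ 2 ^ α - 1) :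
    ∀ n e : ℕ, e < 2 ^ (p * n) →
      ((m ∣ 2 ^ (p * n) * (k * 2 ^ (z - α - 1)) + e ∧
          sTM ((2 ^ (p * n) * (k * 2 ^ (z - α - 1)) + e) / m) = 1) ↔
       (m ∣ 2 ^ (p * n) * (k * 2 ^ (z - α - 1) + k * 2 ^ (z - α) * ℓ) + e ∧
          sTM ((2 ^ (p * n) * (k * 2 ^ (z - α - 1) + k * 2 ^ (z - α) * ℓ) + e) / m)
              = 1 + sTM ℓ)) := by
  intro n e he
  generalize p * n = N at he ⊢
  obtain ⟨b, rfl⟩ : ∃ b, z = α + 1 + b := ⟨z - (α + 1), by omega⟩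
  rw [show α + 1 + b - α - 1 = b by omega, show α + 1 + b - α = b + 1 by omega]
  have hk : 0 < k := hkodd.pos
  have hc : 0 < k * 2 ^ b := by positivity
  have hmpos : 0 < m := by rw [hm]; positivity
  have hA : 2 ^ N * (k * 2 ^ b) + e < 2 ^ N * (k * 2 ^ (b + 1)) := by
    have : 2 ^ N * 1 ≤ 2 ^ N * (k * 2 ^ b) := Nat.mul_le_mul_left _ hc
    have h2 : 2 ^ N * (k * 2 ^ (b + 1)) = 2 * (2 ^ N * (k * 2 ^ b)) := by ring
    omega
  by_cases hN : α ≤ N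
  · obtain ⟨d, rfl⟩ := Nat.exists_eq_add_of_le hN
    have hB : 2 ^ (α + d) * (k * 2 ^ b + k * 2 ^ (b + 1) * ℓ) + e
        = (2 ^ (α + d) * (k * 2 ^ b) + e) + m * (2 ^ d * ℓ) := by
      rw [hm]; ring
    rw [hB, Nat.add_mul_div_left _ _ hmpos, sTM_append, Nat.dvd_add_left (Dvd.intro _ rfl),
      add_left_inj]
    rw [Nat.div_lt_iff_lt_mul hmpos, hm]
    refine lt_of_lt_of_eq hA ?_
    ring
  · obtain ⟨d, rfl⟩ : ∃ d, α = N + 1 + d := ⟨α - (N + 1), by omega⟩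
    constructor
    · rintro ⟨h, -⟩
      exfalso
      have h1 := Nat.le_of_dvd (by positivity) h
      have h2 : m = 2 ^ N * (k * 2 ^ (b + 1)) * 2 ^ (d + 1) := by rw [hm]; ring
      have h3 : 2 ^ N * (k * 2 ^ (b + 1)) * 1 ≤ 2 ^ N * (k * 2 ^ (b + 1)) * 2 ^ (d + 1) :=
        Nat.mul_le_mul_left _ Nat.one_le_two_pow
      omega
    · rintro ⟨h, -⟩
      exfalso
      have h1 : 2 ^ N ∣ m := ⟨k * 2 ^ (1 + d + 1 + b), by rw [hm]; ring⟩
      have h2 : 2 ^ N ∣ e := (Nat.dvd_add_right (Dvd.intro _ rfl)).1 (h1.trans h)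
      have h0 : e = 0 := Nat.eq_zero_of_dvd_of_lt h2 he
      subst h0
      have h4 : (2 ^ N * (k * 2 ^ b)) * 2 ∣ (2 ^ N * (k * 2 ^ b)) * (1 + 2 * ℓ) := by
        have h5 : (2 ^ N * (k * 2 ^ b)) * 2 ∣ m := ⟨2 ^ (d + 1), by rw [hm]; ring⟩
        refine (h5.trans h).trans (dvd_of_eq ?_)
        ring
      have h6 := Nat.dvd_of_mul_dvd_mul_left (by positivity) h4
      omega
end

section
/- Let p ≥ 1 and m = k·2^z with k odd and k ≥ 2. Let (j, x) and (j', x') be two distinct pairs, each belonging to the set ({1,…,k−1} × ZMod 2) ∪ {(0, 1)}. Then there exist n ∈ ℕ and e < 2^{pn} such that exactly one of the following two conditions holds: [m divides 2^{pn}·j + e and s((2^{pn}·j + e)/m) = x] and [m divides 2^{pn}·j' + e and s((2^{pn}·j' + e)/m) = x']. [This shows that the states (j,X) and (j',X') of the projected automaton are distinguishable.] -/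
theorem sTM_even (a : ℕ) (ha : 0 < a) : sTM (2 * a) = sTM a := by
  unfold sTM
  rw [Nat.digits_def' (by norm_num) (by omega : 0 < 2 * a)]
  have h1 : 2 * a % 2 = 0 := by omega
  have h2 : 2 * a / 2 = a := by omega
  rw [h1, h2]
  simp

theorem sTM_odd (a : ℕ) : sTM (2 * a + 1) = sTM a + 1 := by
  unfold sTM
  rw [Nat.digits_def' (by norm_num) (by omega : 0 < 2 * a + 1)]
  have h1 : (2 * a + 1) % 2 = 1 := by omega
  have h2 : (2 * a + 1) / 2 = a := by omega
  rw [h1, h2]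
  simp

theorem accept_exists (p m : ℕ) (hp : 1 ≤ p) (hm : 0 < m) (j : ℕ) (x : ZMod 2) :
    ∃ n e : ℕ, e < 2 ^ (p * n) ∧
      (m ∣ 2 ^ (p * n) * j + e ∧ sTM ((2 ^ (p * n) * j + e) / m) = x) := by
  have hN : 4 * m < 2 ^ (p * (4 * m)) :=
    lt_of_lt_of_le (Nat.lt_two_pow_self) (Nat.pow_le_pow_right (by norm_num) (by nlinarith))
  refine ⟨4 * m, ?_⟩
  generalize 2 ^ (p * (4 * m)) = N at hN
  have key : ∃ q, N * j ≤ m * q ∧ m * q ≤ N * j + 3 * m ∧ sTM q = x := by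
    have h1 := Nat.div_add_mod (N * j) (2 * m)
    have h2 := Nat.mod_lt (N * j) (by omega : 0 < 2 * m)
    generalize N * j / (2 * m) = b at h1
    have h4 := Nat.zero_le (N * j % (2 * m))
    by_cases hx : sTM (b + 1) = x
    · refine ⟨2 * (b + 1), by nlinarith, by nlinarith, ?_⟩
      rw [sTM_even _ (by omega), hx]
    · refine ⟨2 * (b + 1) + 1, by nlinarith, by nlinarith, ?_⟩
      rw [sTM_odd]
      generalize sTM (b + 1) = y at hx
      revert x y
      decide
  obtain ⟨q, h1, h2, h3⟩ := key
  refine ⟨m * q - N * j, by omega, ?_⟩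
  rw [Nat.add_sub_cancel' h1, Nat.mul_div_cancel_left _ hm]
  exact ⟨dvd_mul_right _ _, h3⟩

theorem not_both (k N j j' e : ℕ) (hc : Nat.Coprime k N) (hj : j < k) (hj' : j' < k)
    (h : k ∣ N * j + e) (h' : k ∣ N * j' + e) : j = j' := by
  have h1 : N * j + e ≡ N * j' + e [MOD k] :=
    ((Nat.modEq_zero_iff_dvd).2 h).trans ((Nat.modEq_zero_iff_dvd).2 h').symm
  have h2 := Nat.ModEq.add_right_cancel' e h1
  have h3 : j ≡ j' [MOD k] := Nat.ModEq.cancel_left_of_coprime hc h2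
  exact Nat.ModEq.eq_of_lt_of_lt h3 hj hj'

theorem classes_jX_distinguishable (p m k z : ℕ) (hp : 1 ≤ p) (hkodd : Odd k) (hk : 2 ≤ k)
    (hm : m = k * 2 ^ z)
    (j : ℕ) (x : ZMod 2) (j' : ℕ) (x' : ZMod 2)
    (hjx : (1 ≤ j ∧ j ≤ k - 1) ∨ (j = 0 ∧ x = 1))
    (hjx' : (1 ≤ j' ∧ j' ≤ k - 1) ∨ (j' = 0 ∧ x' = 1))
    (hne : (j, x) ≠ (j', x')) :
    ∃ n e : ℕ, e < 2 ^ (p * n) ∧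
      Xor' (m ∣ 2 ^ (p * n) * j + e ∧ sTM ((2 ^ (p * n) * j + e) / m) = x)
           (m ∣ 2 ^ (p * n) * j' + e ∧ sTM ((2 ^ (p * n) * j' + e) / m) = x') := by
  have hm0 : 0 < m := by rw [hm]; positivity
  obtain ⟨n, e, he, hd, hs⟩ := accept_exists p m hp hm0 j x
  refine ⟨n, e, he, Or.inl ⟨⟨hd, hs⟩, ?_⟩⟩
  rintro ⟨hd', hs'⟩
  have hkm : k ∣ m := hm ▸ dvd_mul_right _ _
  have hjj : j = j' := not_both k (2 ^ (p * n)) j j' e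
    ((Nat.coprime_two_right.2 hkodd).pow_right _) (by omega) (by omega)
    (hkm.trans hd) (hkm.trans hd')
  subst hjj
  exact hne (by rw [← hs, ← hs'])
end
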